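/- Let V ⊂ ℝ^d be open and bounded, and let (R^V, R^{*,V}) be positive linear operators on bounded Borel functions that are in duality with respect to Lebesgue measure: ∫ (R^V f) g = ∫ f (R^{*,V} g) for all bounded nonnegative Borel f, g, with ‖R^{*,V} g‖_∞ ≤ C ‖g‖_∞. Extend R^V to finite positive Borel measures β on V by the same duality: ∫ (R^V β) g dx := ∫ (R^{*,V} g) dβ. If β_n → β weakly in the dual of C_b(V) (with sup_n β_n(V) < ∞) and R^{*,V} maps bounded Borel functions into C_b(V) (strong Feller), then R^V β_n → R^V β weakly in L¹(V), and in particular the sequence (R^V β_n) is uniformly integrable on V. -/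

import Mathlib

open MeasureTheory Set Filter
open scoped Topology ENNReal

variable {d : ℕ}

local notation "E" => EuclideanSpace ℝ (Fin d)

/-!
Testing the duality against indicators shows that each potential `fₙ = R^V βₙ` is nonnegative, and,
since `R^{*,V} g` is bounded and continuous on `V`, weak-* convergence of `βₙ` gives
`∫ fₙ g → ∫ f g` for every bounded Borel `g ≥ 0`; adding a constant to `g` removes the sign
restriction.

For nonnegative functions, uniform integrability then follows without Dunford–Pettis: if it failed,
there would be sets `Aⱼ` with summable measures on which a subsequence `f_{kⱼ}` keeps mass above
`ε`. The tail unions `Bₘ = ⋃_{j ≥ m} Aⱼ` have measure tending to `0`, so `∫_{Bₘ} f < ε` for some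
fixed `m`, and then `∫_{Aⱼ} f_{kⱼ} ≤ ∫_{Bₘ} f_{kⱼ} < ε` for all large `j`.
-/

section UniformIntegrability

variable {α : Type*} [MeasurableSpace α] {μ : Measure α}

theorem tendsto_measure_iUnion_nat_add {A : ℕ → Set α} (hA : ∑' n, μ (A n) ≠ ∞) :
    Tendsto (fun m ↦ μ (⋃ j, A (j + m))) atTop (𝓝 0) :=
  tendsto_of_tendsto_of_tendsto_of_le_of_le tendsto_const_nhds (ENNReal.tendsto_sum_nat_add _ hA)
    (fun _ ↦ zero_le) (fun _ ↦ measure_iUnion_le _)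

variable {f : ℕ → α → ℝ} {g : α → ℝ}

theorem tendsto_setIntegral_zero_of_tsum_measure_ne_top (hf : ∀ n, Integrable (f n) μ)
    (hf_nonneg : ∀ n, 0 ≤ᵐ[μ] f n) (hg : Integrable g μ)
    (hlim : ∀ s, MeasurableSet s →
      Tendsto (fun n ↦ ∫ x in s, f n x ∂μ) atTop (𝓝 (∫ x in s, g x ∂μ)))
    {A : ℕ → Set α} (hA : ∀ n, MeasurableSet (A n)) (hA_sum : ∑' n, μ (A n) ≠ ∞) :
    Tendsto (fun n ↦ ∫ x in A n, f n x ∂μ) atTop (𝓝 0) := by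
  refine tendsto_order.2 ⟨fun a ha ↦ .of_forall fun n ↦ ha.trans_le <|
    setIntegral_nonneg_of_ae (hf_nonneg n), fun ε hε ↦ ?_⟩
  obtain ⟨m, hgm⟩ : ∃ m, ∫ x in ⋃ j, A (j + m), g x ∂μ < ε :=
    ((hg.tendsto_setIntegral_nhds_zero (tendsto_measure_iUnion_nat_add hA_sum)).eventually_lt_const
      hε).exists
  filter_upwards [(hlim _ (.iUnion fun j ↦ hA (j + m))).eventually_lt_const hgm,
    eventually_ge_atTop m] with n hfn hmn
  have hsub : A n ⊆ ⋃ j, A (j + m) := by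
    simpa only [Nat.sub_add_cancel hmn] using subset_iUnion (fun j ↦ A (j + m)) (n - m)
  exact (setIntegral_mono_set (hf n).integrableOn (ae_restrict_of_ae (hf_nonneg n))
    hsub.eventuallyLE).trans_lt hfn

theorem exists_forall_ge_setIntegral_le_of_tendsto_setIntegral (hf : ∀ n, Integrable (f n) μ)
    (hf_nonneg : ∀ n, 0 ≤ᵐ[μ] f n) (hg : Integrable g μ)
    (hlim : ∀ s, MeasurableSet s →
      Tendsto (fun n ↦ ∫ x in s, f n x ∂μ) atTop (𝓝 (∫ x in s, g x ∂μ)))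
    {ε : ℝ} (hε : 0 < ε) :
    ∃ N, ∃ δ > 0, ∀ n ≥ N, ∀ s, MeasurableSet s → μ s ≤ ENNReal.ofReal δ →
      ∫ x in s, f n x ∂μ ≤ ε := by
  by_contra! hcon
  choose k hk A hA hA_le hA_gt using fun j : ℕ ↦ hcon j ((1 / 2) ^ j) (by positivity)
  have hk_lim : Tendsto k atTop atTop := tendsto_atTop_mono hk tendsto_id
  have hA_sum : ∑' j, μ (A j) ≠ ∞ := by
    refine ne_top_of_le_ne_top ?_ (ENNReal.tsum_le_tsum hA_le)
    rw [← ENNReal.ofReal_tsum_of_nonneg (fun j ↦ by positivity) summable_geometric_two]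
    exact ENNReal.ofReal_ne_top
  have hzero : Tendsto (fun j ↦ ∫ x in A j, f (k j) x ∂μ) atTop (𝓝 0) :=
    tendsto_setIntegral_zero_of_tsum_measure_ne_top (fun j ↦ hf (k j)) (fun j ↦ hf_nonneg (k j)) hg
      (fun s hs ↦ (hlim s hs).comp hk_lim) hA hA_sum
  exact hε.not_ge (ge_of_tendsto' hzero fun j ↦ (hA_gt j).le)

theorem eLpNorm_one_indicator_of_ae_nonneg {u : α → ℝ} (hu : Integrable u μ)
    (hu_nonneg : 0 ≤ᵐ[μ] u) {s : Set α} (hs : MeasurableSet s) :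
    eLpNorm (s.indicator u) 1 μ = ENNReal.ofReal (∫ x in s, u x ∂μ) := by
  rw [eLpNorm_indicator_eq_eLpNorm_restrict hs, eLpNorm_one_eq_lintegral_enorm,
    ofReal_integral_eq_lintegral_ofReal hu.restrict (ae_restrict_of_ae hu_nonneg)]
  refine lintegral_congr_ae ?_
  filter_upwards [ae_restrict_of_ae hu_nonneg] with x hx
  exact Real.enorm_of_nonneg hx

theorem unifIntegrable_of_tendsto_setIntegral (hf : ∀ n, Integrable (f n) μ)
    (hf_nonneg : ∀ n, 0 ≤ᵐ[μ] f n) (hg : Integrable g μ)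
    (hlim : ∀ s, MeasurableSet s →
      Tendsto (fun n ↦ ∫ x in s, f n x ∂μ) atTop (𝓝 (∫ x in s, g x ∂μ))) :
    UnifIntegrable f 1 μ := by
  intro ε hε
  obtain ⟨N, δ, hδ, htail⟩ :=
    exists_forall_ge_setIntegral_le_of_tendsto_setIntegral hf hf_nonneg hg hlim hε
  have hhead : UnifIntegrable (fun i : Fin N ↦ f i) 1 μ :=
    unifIntegrable_finite le_rfl ENNReal.one_ne_top fun i ↦ memLp_one_iff_integrable.2 (hf i)
  obtain ⟨δ', hδ', hhead⟩ := hhead hε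
  refine ⟨min δ δ', lt_min hδ hδ', fun n s hs hμs ↦ ?_⟩
  rcases lt_or_ge n N with hn | hn
  · exact hhead ⟨n, hn⟩ s hs (hμs.trans (ENNReal.ofReal_le_ofReal (min_le_right _ _)))
  · rw [eLpNorm_one_indicator_of_ae_nonneg (hf n) (hf_nonneg n) hs]
    exact ENNReal.ofReal_le_ofReal
      (htail n hn s hs (hμs.trans (ENNReal.ofReal_le_ofReal (min_le_left _ _))))

end UniformIntegrability

section NonnegTestFunctions

theorem abs_indicator_one_le_one {α : Type*} (s : Set α) (x : α) :
    |s.indicator (1 : α → ℝ) x| ≤ 1 := by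
  by_cases hx : x ∈ s <;> simp [hx]

variable {α : Type*} [MeasurableSpace α] {μ : Measure α}

theorem integral_mul_indicator_one (u : α → ℝ) {s : Set α} (hs : MeasurableSet s) :
    ∫ x, u x * s.indicator 1 x ∂μ = ∫ x in s, u x ∂μ := by
  simp only [← indicator_mul_right, Pi.one_apply, mul_one, integral_indicator hs]

theorem ae_nonneg_of_forall_integral_mul_nonneg {u : α → ℝ} (hu : Integrable u μ)
    (h : ∀ g : α → ℝ, Measurable g → (∀ x, 0 ≤ g x) → (∃ M, ∀ x, |g x| ≤ M) →
      0 ≤ ∫ x, u x * g x ∂μ) :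
    0 ≤ᵐ[μ] u := by
  refine ae_nonneg_of_forall_setIntegral_nonneg hu fun s hs _ ↦ ?_
  rw [← integral_mul_indicator_one u hs]
  exact h _ (measurable_one.indicator hs) (indicator_nonneg fun _ _ ↦ zero_le_one)
    ⟨1, abs_indicator_one_le_one s⟩

theorem tendsto_setIntegral_of_forall_tendsto_integral_mul {ι : Type*} {l : Filter ι}
    {f : ι → α → ℝ} {u : α → ℝ}
    (h : ∀ g : α → ℝ, Measurable g → (∀ x, 0 ≤ g x) → (∃ M, ∀ x, |g x| ≤ M) →
      Tendsto (fun i ↦ ∫ x, f i x * g x ∂μ) l (𝓝 (∫ x, u x * g x ∂μ)))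
    {s : Set α} (hs : MeasurableSet s) :
    Tendsto (fun i ↦ ∫ x in s, f i x ∂μ) l (𝓝 (∫ x in s, u x ∂μ)) := by
  simpa only [integral_mul_indicator_one _ hs] using
    h _ (measurable_one.indicator hs) (indicator_nonneg fun _ _ ↦ zero_le_one)
      ⟨1, abs_indicator_one_le_one s⟩

theorem integral_mul_eq_integral_mul_add_const_sub {u ξ : α → ℝ} (hu : Integrable u μ)
    (huξ : Integrable (fun x ↦ u x * ξ x) μ) (c : ℝ) :
    ∫ x, u x * ξ x ∂μ = ∫ x, u x * (ξ x + c) ∂μ - ∫ x, u x * c ∂μ := by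
  simp only [mul_add]
  rw [integral_add huξ (hu.mul_const c), add_sub_cancel_right]

theorem tendsto_integral_mul_of_forall_nonneg {ι : Type*} {l : Filter ι}
    {f : ι → α → ℝ} {u : α → ℝ} (hf : ∀ i, Integrable (f i) μ) (hu : Integrable u μ)
    (h : ∀ g : α → ℝ, Measurable g → (∀ x, 0 ≤ g x) → (∃ M, ∀ x, |g x| ≤ M) →
      Tendsto (fun i ↦ ∫ x, f i x * g x ∂μ) l (𝓝 (∫ x, u x * g x ∂μ)))
    {ξ : α → ℝ} (hξ : Measurable ξ) (hξ_bdd : ∃ M, ∀ x, |ξ x| ≤ M) :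
    Tendsto (fun i ↦ ∫ x, f i x * ξ x ∂μ) l (𝓝 (∫ x, u x * ξ x ∂μ)) := by
  obtain ⟨M, hM⟩ := hξ_bdd
  obtain ⟨K, hK_nonneg, hK⟩ : ∃ K, 0 ≤ K ∧ ∀ x, |ξ x| ≤ K :=
    ⟨|M|, abs_nonneg M, fun x ↦ (hM x).trans (le_abs_self M)⟩
  have hsplit (v : α → ℝ) (hv : Integrable v μ) :
      ∫ x, v x * ξ x ∂μ = ∫ x, v x * (ξ x + K) ∂μ - ∫ x, v x * K ∂μ :=
    integral_mul_eq_integral_mul_add_const_sub hv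
      (hv.mul_bdd hξ.aestronglyMeasurable (.of_forall hK)) K
  have hshift_nonneg (x : α) : 0 ≤ ξ x + K := by linarith [neg_le_of_abs_le (hK x)]
  have hshift_le (x : α) : |ξ x + K| ≤ K + K := by
    rw [abs_of_nonneg (hshift_nonneg x)]
    linarith [le_of_abs_le (hK x)]
  simp only [hsplit u hu, fun i ↦ hsplit (f i) (hf i)]
  exact (h _ (hξ.add_const _) hshift_nonneg ⟨_, hshift_le⟩).sub
    (h _ measurable_const (fun _ ↦ hK_nonneg) ⟨_, fun _ ↦ le_rfl⟩)

end NonnegTestFunctions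

/- The measures `βₙ` and `β` enter only as functionals `Λn n` and `Λ` on the functions that are
bounded and continuous on `V`. The measure `μ` stands for Lebesgue measure restricted to `V`. -/
theorem stmt9_general {X : Type*} [TopologicalSpace X] [MeasurableSpace X] {μ : Measure X}
    {V : Set X} (Rstar : (X → ℝ) → X → ℝ)
    (hRpos : ∀ g : X → ℝ, Measurable g → (∀ x, 0 ≤ g x) → (∃ M, ∀ x, |g x| ≤ M) →
      ∀ x, 0 ≤ Rstar g x)
    (hRbdd : ∀ g : X → ℝ, Measurable g → (∃ M, ∀ x, |g x| ≤ M) → ∃ M, ∀ x, |Rstar g x| ≤ M)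
    (hSF : ∀ g : X → ℝ, Measurable g → (∃ M, ∀ x, |g x| ≤ M) → ContinuousOn (Rstar g) V)
    (Λn : ℕ → (X → ℝ) → ℝ) (Λ : (X → ℝ) → ℝ)
    (hΛpos : ∀ n, ∀ φ : X → ℝ, ContinuousOn φ V → (∃ M, ∀ x, |φ x| ≤ M) → (∀ x, 0 ≤ φ x) →
      0 ≤ Λn n φ)
    (hweak : ∀ φ : X → ℝ, ContinuousOn φ V → (∃ M, ∀ x, |φ x| ≤ M) →
      Tendsto (fun n ↦ Λn n φ) atTop (𝓝 (Λ φ)))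
    (fn : ℕ → X → ℝ) (f : X → ℝ) (hfnint : ∀ n, Integrable (fn n) μ) (hfint : Integrable f μ)
    (hdualn : ∀ n, ∀ g : X → ℝ, Measurable g → (∀ x, 0 ≤ g x) → (∃ M, ∀ x, |g x| ≤ M) →
      ∫ x, fn n x * g x ∂μ = Λn n (Rstar g))
    (hdual : ∀ g : X → ℝ, Measurable g → (∀ x, 0 ≤ g x) → (∃ M, ∀ x, |g x| ≤ M) →
      ∫ x, f x * g x ∂μ = Λ (Rstar g)) :
    (∀ ξ : X → ℝ, Measurable ξ → (∃ M, ∀ x, |ξ x| ≤ M) →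
      Tendsto (fun n ↦ ∫ x, fn n x * ξ x ∂μ) atTop (𝓝 (∫ x, f x * ξ x ∂μ))) ∧
    UnifIntegrable fn 1 μ := by
  have hfn_nonneg (n : ℕ) : 0 ≤ᵐ[μ] fn n :=
    ae_nonneg_of_forall_integral_mul_nonneg (hfnint n) fun g hg hg0 hgb ↦
      (hΛpos n _ (hSF g hg hgb) (hRbdd g hg hgb) (hRpos g hg hg0 hgb)).trans_eq
        (hdualn n g hg hg0 hgb).symm
  have hlim (g : X → ℝ) (hg : Measurable g) (hg0 : ∀ x, 0 ≤ g x) (hgb : ∃ M, ∀ x, |g x| ≤ M) :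
      Tendsto (fun n ↦ ∫ x, fn n x * g x ∂μ) atTop (𝓝 (∫ x, f x * g x ∂μ)) := by
    simpa only [hdual g hg hg0 hgb, fun n ↦ hdualn n g hg hg0 hgb] using
      hweak _ (hSF g hg hgb) (hRbdd g hg hgb)
  exact ⟨fun ξ hξ hξb ↦ tendsto_integral_mul_of_forall_nonneg hfnint hfint hlim hξ hξb,
    unifIntegrable_of_tendsto_setIntegral hfnint hfn_nonneg hfint
      fun _ ↦ tendsto_setIntegral_of_forall_tendsto_integral_mul hlim⟩

/-- Weak `L¹` convergence of Green potentials: if `β_n → β` weak-* in the dual of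
`C_b(V)` with bounded masses, `R^{*,V}` is strongly Feller and bounded, and
`f_n = R^V β_n`, `f = R^V β` are the potentials defined by the duality
`∫_V (R^V β) g dx = ∫ (R^{*,V} g) dβ`, then `R^V β_n → R^V β` weakly in `L¹(V)` and
the sequence `(R^V β_n)` is uniformly integrable on `V`. -/
theorem stmt9 (V : Set E) (hVo : IsOpen V) (hVb : Bornology.IsBounded V)
    (Rstar : (EuclideanSpace ℝ (Fin d) → ℝ) → EuclideanSpace ℝ (Fin d) → ℝ)
    (hRpos : ∀ g : E → ℝ, (∀ x, 0 ≤ g x) → ∀ x, 0 ≤ Rstar g x)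
    (C : ℝ) (hRbdd : ∀ (g : E → ℝ) (M : ℝ), Measurable g → (∀ x, |g x| ≤ M) →
      ∀ x, |Rstar g x| ≤ C * M)
    (hSF : ∀ g : E → ℝ, Measurable g → (∃ M, ∀ x, |g x| ≤ M) →
      ContinuousOn (Rstar g) V)
    (βn : ℕ → Measure (EuclideanSpace ℝ (Fin d))) (β : Measure (EuclideanSpace ℝ (Fin d)))
    [∀ n, IsFiniteMeasure (βn n)] [IsFiniteMeasure β]
    (hβnV : ∀ n, βn n Vᶜ = 0) (hβV : β Vᶜ = 0)
    (Mmass : ℝ) (hmass : ∀ n, (βn n univ).toReal ≤ Mmass)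
    (hweak : ∀ g : E → ℝ, ContinuousOn g V → (∃ M, ∀ x, |g x| ≤ M) →
      Tendsto (fun n => ∫ x, g x ∂(βn n)) atTop (𝓝 (∫ x, g x ∂β)))
    (fn : ℕ → EuclideanSpace ℝ (Fin d) → ℝ) (f : EuclideanSpace ℝ (Fin d) → ℝ)
    (hfnmeas : ∀ n, AEStronglyMeasurable (fn n) (volume.restrict V))
    (hfnint : ∀ n, IntegrableOn (fn n) V) (hfint : IntegrableOn f V)
    (hdualn : ∀ n, ∀ g : E → ℝ, Measurable g → (∀ x, 0 ≤ g x) → (∃ M, ∀ x, |g x| ≤ M) →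
      ∫ x in V, fn n x * g x = ∫ x, Rstar g x ∂(βn n))
    (hdual : ∀ g : E → ℝ, Measurable g → (∀ x, 0 ≤ g x) → (∃ M, ∀ x, |g x| ≤ M) →
      ∫ x in V, f x * g x = ∫ x, Rstar g x ∂β) :
    (∀ ξ : E → ℝ, Measurable ξ → (∃ M, ∀ x, |ξ x| ≤ M) →
      Tendsto (fun n => ∫ x in V, fn n x * ξ x) atTop (𝓝 (∫ x in V, f x * ξ x))) ∧
    UnifIntegrable fn 1 (volume.restrict V) :=
  stmt9_general Rstar (fun g _ hg _ ↦ hRpos g hg) (fun g hg ⟨M, hM⟩ ↦ ⟨C * M, hRbdd g M hg hM⟩) hSF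
    (fun n φ ↦ ∫ x, φ x ∂βn n) (fun φ ↦ ∫ x, φ x ∂β) (fun _ _ _ _ hφ ↦ integral_nonneg hφ) hweak
    fn f hfnint hfint hdualn hdual
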